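/- The Lie algebra sl(6) over an algebraically closed field of characteristic zero has exactly two non-trivial irreducible representations of dimension at most 14: the standard 6-dimensional representation and its dual. -/

import Mathlib

open Module LieAlgebra.SpecialLinear

section Sl6Aux

set_option linter.unusedSectionVars false

attribute [local instance] LieRing.ofAssociativeRing

variable {k : Type*} [Field k] [IsAlgClosed k] [CharZero k] {M : Type*} [AddCommGroup M] [Module k M] [FiniteDimensional k M]

lemma sl2_string (H E F : Module.End k M) (hEF : E * F - F * E = H)
    (hHE : H * E - E * H = 2 • E) (hHF : H * F - F * H = -(2 • F)) (m : M) (hm : m ≠ 0)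
    (a : k) (ha : H m = a • m) :
    ∃ n : ℤ, a = n ∧ ∃ p : ℕ, ∀ t : ℕ, (t : ℤ) ≤ n → (F ^ (p + t)) ((E ^ p) m) ≠ 0 := by
  by_cases hH : H = 0
  · refine ⟨0, ?_, 0, ?_⟩
    · rw [hH] at ha
      simpa [hm, eq_comm] using ha
    · intro t ht
      have : t = 0 := by omega
      subst this
      simpa using hm
  have T : IsSl2Triple H E F := ⟨hH, hEF, hHE, hHF⟩
  have key : ∃ p, (E ^ p) m = 0 := by
    by_contra! contra
    let evals (n : ℕ) : k := a + 2 * (n : k)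
    have h_inj : Function.Injective evals := fun a b hab ↦ by
      simpa [evals, add_right_inj, mul_eq_mul_left_iff, Nat.cast_inj] using hab
    have aux (μ : Set.range evals) : H.HasEigenvector μ ((E ^ μ.property.choose) m) := by
      set n := μ.property.choose
      refine ⟨?_, contra n⟩
      rw [Module.End.mem_eigenspace_iff, ← μ.property.choose_spec]
      exact T.lie_h_pow_toEnd_e (M := M) ha n
    have _i := (H.eigenvectors_linearIndependent (Set.range evals) _ aux).finite
    exact (Set.infinite_range_of_injective h_inj) (Set.toFinite _)
  obtain ⟨p, hp, hp'⟩ := Nat.exists_not_and_succ_of_not_zero_of_exists (p := fun p => (E ^ p) m = 0)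
    (by simpa using hm) key
  have P : T.HasPrimitiveVectorWith ((E ^ p) m) (a + 2 * p) :=
    ⟨hp, T.lie_h_pow_toEnd_e (M := M) ha p, by
      have := hp'
      rw [pow_succ'] at this
      exact this⟩
  obtain ⟨q, hq⟩ := P.exists_nat
  refine ⟨q - 2 * p, by push_cast; rw [← hq]; ring, p, fun t ht => ?_⟩
  exact P.pow_toEnd_f_ne_zero_of_eq_nat hq (by omega)

/-- `m` has weight `χ`. -/
def Wt (f : Matrix (Fin 6) (Fin 6) k →ₗ[k] Module.End k M) (χ : Fin 6 → k) (m : M) : Prop :=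
  ∀ i, f (Matrix.single i i 1) m = χ i • m

/-- `χ` is an integral weight. -/
def IsW (f : Matrix (Fin 6) (Fin 6) k →ₗ[k] Module.End k M) (χ : Fin 6 → ℤ) : Prop :=
  ∃ m : M, m ≠ 0 ∧ Wt f (fun i => (χ i : k)) m

lemma Wt.single_apply {f : Matrix (Fin 6) (Fin 6) k →ₗ[k] Module.End k M}
    (hf : ∀ A B, f (A * B - B * A) = f A * f B - f B * f A) {χ : Fin 6 → k} {m : M}
    (h : Wt f χ m) (i j : Fin 6) :
    Wt f (χ + (Pi.single i 1 - Pi.single j 1)) (f (Matrix.single i j 1) m) := by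
  intro l
  have h1 := hf (Matrix.single l l 1) (Matrix.single i j 1)
  have h3 : (Matrix.single l l 1 * Matrix.single i j 1 - Matrix.single i j 1 * Matrix.single l l 1
      : Matrix (Fin 6) (Fin 6) k) =
      ((Pi.single i 1 - Pi.single j 1 : Fin 6 → k) l) • Matrix.single i j 1 := by
    by_cases hi : l = i <;> by_cases hj : l = j
    · subst hi; subst hj; simp
    · subst hi; simp [hj, Ne.symm hj]
    · subst hj; simp [hi]
    · simp [hi, hj, Ne.symm hj]
  rw [h3, map_smul] at h1
  have h2 := congrArg (fun g : Module.End k M => g m) h1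
  simp only [LinearMap.sub_apply, Module.End.mul_apply, LinearMap.smul_apply] at h2
  rw [h l, map_smul] at h2
  rw [eq_sub_iff_add_eq] at h2
  rw [← h2, ← add_smul]
  congr 1
  simp [add_comm]

lemma Wt.pow_apply {f : Matrix (Fin 6) (Fin 6) k →ₗ[k] Module.End k M}
    (hf : ∀ A B, f (A * B - B * A) = f A * f B - f B * f A) {χ : Fin 6 → k} {m : M}
    (h : Wt f χ m) (i j : Fin 6) (p : ℕ) :
    Wt f (χ + (p : k) • (Pi.single i 1 - Pi.single j 1)) ((f (Matrix.single i j 1) ^ p) m) := by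
  induction p with
  | zero => simpa using h
  | succ p ih =>
    have := ih.single_apply hf i j
    rw [pow_succ', Module.End.mul_apply]
    convert this using 1
    push_cast
    rw [add_smul, one_smul, add_assoc]

lemma Wt.string {f : Matrix (Fin 6) (Fin 6) k →ₗ[k] Module.End k M}
    (hf : ∀ A B, f (A * B - B * A) = f A * f B - f B * f A) {χ : Fin 6 → k} {m : M}
    (h : Wt f χ m) (hm : m ≠ 0) {i j : Fin 6} (hij : i ≠ j) :
    ∃ n : ℤ, χ i - χ j = n ∧ ∀ t : ℕ, (t : ℤ) ≤ n →
      ∃ m' : M, m' ≠ 0 ∧ Wt f (χ - (t : k) • (Pi.single i 1 - Pi.single j 1)) m' := by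
  obtain ⟨n, hn, p, hp⟩ := sl2_string
    (f (Matrix.single i i 1 - Matrix.single j j 1)) (f (Matrix.single i j 1))
    (f (Matrix.single j i 1))
    (by rw [← hf]; simp)
    (by rw [← hf, ← map_nsmul]; congr 1; simp [sub_mul, mul_sub, hij.symm, two_smul])
    (by rw [← hf, ← map_nsmul, ← map_neg]; congr 1
        simp [sub_mul, mul_sub, hij, two_smul]; abel)
    m hm (χ i - χ j) (by rw [map_sub, LinearMap.sub_apply, h i, h j, sub_smul])
  refine ⟨n, hn, fun t ht => ⟨_, hp t ht, ?_⟩⟩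
  have := (h.pow_apply hf i j p).pow_apply hf j i (p + t)
  convert this using 1
  push_cast
  module

lemma IsW.sat {f : Matrix (Fin 6) (Fin 6) k →ₗ[k] Module.End k M}
    (hf : ∀ A B, f (A * B - B * A) = f A * f B - f B * f A) {χ : Fin 6 → ℤ}
    (h : IsW f χ) {i j : Fin 6} (hij : i ≠ j) (t : ℕ) (ht : (t : ℤ) ≤ χ i - χ j) :
    IsW f (χ - (t : ℤ) • (Pi.single i 1 - Pi.single j 1)) := by
  obtain ⟨m, hm, hw⟩ := h
  obtain ⟨n, hn, hs⟩ := hw.string hf hm hij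
  have : n = χ i - χ j := by
    have : ((χ i - χ j : ℤ) : k) = n := by push_cast; exact hn
    exact_mod_cast this.symm
  obtain ⟨m', hm', hw'⟩ := hs t (by omega)
  refine ⟨m', hm', ?_⟩
  convert hw' using 1
  ext l
  simp [Pi.single_apply]

lemma IsW.swap {f : Matrix (Fin 6) (Fin 6) k →ₗ[k] Module.End k M}
    (hf : ∀ A B, f (A * B - B * A) = f A * f B - f B * f A) {χ : Fin 6 → ℤ}
    (h : IsW f χ) {i j : Fin 6} (hij : i ≠ j) : IsW f (χ ∘ Equiv.swap i j) := by
  wlog hle : χ j ≤ χ i generalizing i j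
  · rw [Equiv.swap_comm]
    exact this hij.symm (by omega)
  have := h.sat hf hij (χ i - χ j).toNat (by omega)
  convert this using 1
  rw [Int.toNat_of_nonneg (by omega)]
  ext l
  by_cases hi : l = i
  · subst hi; simp [hij]
  · by_cases hj : l = j
    · subst hj; simp [hi]
    · simp [hi, hj, Equiv.swap_apply_of_ne_of_ne]

lemma IsW.perm {f : Matrix (Fin 6) (Fin 6) k →ₗ[k] Module.End k M}
    (hf : ∀ A B, f (A * B - B * A) = f A * f B - f B * f A) (σ : Equiv.Perm (Fin 6)) :
    ∀ {χ : Fin 6 → ℤ}, IsW f χ → IsW f (χ ∘ σ) := by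
  induction σ using Equiv.Perm.swap_induction_on with
  | one => intro χ h; exact h
  | swap_mul σ x y hxy ih =>
    intro χ h
    exact ih (h.swap hf hxy)

lemma diag_commute {f : Matrix (Fin 6) (Fin 6) k →ₗ[k] Module.End k M}
    (hf : ∀ A B, f (A * B - B * A) = f A * f B - f B * f A) (i j : Fin 6) :
    Commute (f (Matrix.single i i 1)) (f (Matrix.single j j 1)) := by
  rw [commute_iff_eq, ← sub_eq_zero, ← hf]
  by_cases h : i = j
  · subst h; simp
  · simp [h, Ne.symm h]

lemma IsW.card_le {f : Matrix (Fin 6) (Fin 6) k →ₗ[k] Module.End k M}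
    (hf : ∀ A B, f (A * B - B * A) = f A * f B - f B * f A) (S : Finset (Fin 6 → ℤ))
    (hS : ∀ χ ∈ S, IsW f χ) : S.card ≤ finrank k M := by
  have ind := Module.End.independent_iInf_maxGenEigenspace_of_forall_mapsTo
    (fun i => f (Matrix.single i i 1))
    (fun i j φ => Module.End.mapsTo_maxGenEigenspace_of_comm (diag_commute hf j i) φ)
  have hinj : Function.Injective (fun (χ : S) (i : Fin 6) => ((χ.1 i : ℤ) : k)) := by
    intro a b hab
    ext i
    have := congrFun hab i
    simpa using this
  have ind2 := ind.comp hinj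
  choose v hv hw using hS
  have li := ind2.linearIndependent _ (v := fun χ : S => v χ.1 χ.2) (fun χ => by
    simp only [Function.comp, Submodule.mem_iInf]
    intro i
    exact (f (Matrix.single i i 1)).genEigenspace_le_maximal _ 1 |>
      fun h => h (by simpa using hw χ.1 χ.2 i)) (fun χ => hv χ.1 χ.2)
  simpa using li.fintype_card_le_finrank

lemma common_eig (D : Fin 6 → Module.End k M) [Nontrivial M] (hD : ∀ i j, Commute (D i) (D j))
    (s : Finset (Fin 6)) : ∃ (χ : Fin 6 → k) , (⨅ i ∈ s, (D i).eigenspace (χ i)) ≠ ⊥ := by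
  induction s using Finset.induction_on with
  | empty => exact ⟨0, by simp⟩
  | insert a s ha ih =>
    obtain ⟨χ, hχ⟩ := ih
    set V := (⨅ i ∈ s, (D i).eigenspace (χ i)) with hV
    have hmap : ∀ x ∈ V, D a x ∈ V := by
      intro x hx
      simp only [hV, Submodule.mem_iInf, Module.End.mem_eigenspace_iff] at hx ⊢
      intro i hi
      have := congrArg (fun g : Module.End k M => g x) (hD i a).eq
      simp only [Module.End.mul_apply] at this
      rw [this, hx i hi, map_smul]
    have : Nontrivial V := Submodule.nontrivial_iff_ne_bot.mpr hχ
    obtain ⟨c, hc⟩ := Module.End.exists_eigenvalue ((D a).restrict hmap)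
    obtain ⟨v, hv⟩ := hc.exists_hasEigenvector
    refine ⟨Function.update χ a c, ?_⟩
    rw [Submodule.ne_bot_iff]
    refine ⟨v, ?_, by simpa using hv.2⟩
    have hvm := v.2
    simp only [hV, Submodule.mem_iInf, Module.End.mem_eigenspace_iff, Finset.mem_insert] at hvm ⊢
    rintro i (rfl | hi)
    · simpa using congrArg Subtype.val hv.apply_eq_smul
    · rw [Function.update_of_ne (by rintro rfl; exact ha hi)]
      exact hvm i hi

lemma level_card (W : (Fin 6 → ℤ) → Prop) (hperm : ∀ (σ : Equiv.Perm (Fin 6)) χ, W χ → W (χ ∘ σ))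
    (hcard : ∀ S : Finset (Fin 6 → ℤ), (∀ χ ∈ S, W χ) → S.card ≤ 14) (χ : Fin 6 → ℤ) (hχ : W χ)
    (P : ℤ → Prop) [DecidablePred P] (h2 : 2 ≤ (Finset.univ.filter fun i => P (χ i)).card)
    (h4 : (Finset.univ.filter fun i => P (χ i)).card ≤ 4) : False := by
  set T := Finset.univ.filter fun i => P (χ i) with hT
  have hex : ∀ U : Finset (Fin 6), U.card = T.card → ∃ σ : Equiv.Perm (Fin 6),
      (Finset.univ.filter fun i => P (χ (σ i))) = U := by
    intro U hU
    let e : {x // x ∈ U} ≃ {x // x ∈ T} := Finset.equivOfCardEq hU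
    refine ⟨e.extendSubtype, ?_⟩
    ext i
    have hmem : ∀ x, P (χ x) ↔ x ∈ T := by simp [hT]
    simp only [Finset.mem_filter, Finset.mem_univ, true_and, hmem]
    constructor
    · intro h
      by_contra hi
      exact e.extendSubtype_not_mem i hi h
    · exact fun h => e.extendSubtype_mem i h
  choose! σ hσ using hex
  have := hcard ((Finset.univ.powersetCard T.card).image fun U => χ ∘ σ U) (by
    intro ψ hψ
    simp only [Finset.mem_image] at hψ
    obtain ⟨U, -, rfl⟩ := hψ
    exact hperm _ _ hχ)
  rw [Finset.card_image_of_injOn, Finset.card_powersetCard, Finset.card_univ, Fintype.card_fin] at this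
  · generalize T.card = n at *
    interval_cases n <;> simp [Nat.choose] at this
  · intro U hU V hV hUV
    simp only [Finset.mem_coe,
      Finset.mem_powersetCard] at hU hV
    rw [← hσ U hU.2, ← hσ V hV.2]
    ext i
    have := congrFun hUV i
    simp only [Function.comp] at this
    simp [this]

lemma weights_shape (W : (Fin 6 → ℤ) → Prop)
    (hperm : ∀ (σ : Equiv.Perm (Fin 6)) χ, W χ → W (χ ∘ σ))
    (hsat : ∀ χ i j, i ≠ j → χ j < χ i → W χ → W (χ - (Pi.single i 1 - Pi.single j 1)))
    (hcard : ∀ S : Finset (Fin 6 → ℤ), (∀ χ ∈ S, W χ) → S.card ≤ 14) (χ : Fin 6 → ℤ) (hχ : W χ) :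
    ∃ (b : ℤ) (i : Fin 6) (ε : ℤ), (ε = 0 ∨ ε = 1 ∨ ε = -1) ∧
      ∀ l, χ l = b + if l = i then ε else 0 := by
  have key := fun (ψ : Fin 6 → ℤ) (hψ : W ψ) (P : ℤ → Prop) (_ : DecidablePred P) =>
    level_card W hperm hcard ψ hψ P
  -- some fibre omits at most one point
  have step1 : ∃ (b : ℤ) (i : Fin 6), ∀ l, l ≠ i → χ l = b := by
    have fib : ∀ b : ℤ, 5 ≤ (Finset.univ.filter fun i => χ i = b).card →
        ∃ (b : ℤ) (i : Fin 6), ∀ l, l ≠ i → χ l = b := by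
      intro b hb
      have hc : (Finset.univ.filter fun i => ¬ χ i = b).card ≤ 1 := by
        have := Finset.card_filter_add_card_filter_not (s := (Finset.univ : Finset (Fin 6))) (fun i => χ i = b)
        rw [Finset.card_univ, Fintype.card_fin] at this
        omega
      rw [Finset.card_le_one_iff_subset_singleton] at hc
      obtain ⟨i, hi⟩ := hc
      refine ⟨b, i, fun l hl => ?_⟩
      by_contra hne
      have := hi (Finset.mem_filter.mpr ⟨Finset.mem_univ l, hne⟩)
      exact hl (by simpa using this)
    by_cases h5 : 5 ≤ (Finset.univ.filter fun i => χ i = χ 0).card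
    · exact fib _ h5
    have h0 : (Finset.univ.filter fun i => χ i = χ 0).card ≤ 1 := by
      by_contra hh
      exact key χ hχ (fun x => x = χ 0) inferInstance (by omega) (by omega)
    have h01 : χ 1 ≠ χ 0 := by
      intro hh
      rw [Finset.card_le_one] at h0
      exact absurd (h0 0 (by simp) 1 (by simp [hh])) (by decide)
    have hu : (Finset.univ.filter fun i => χ i = χ 0 ∨ χ i = χ 1).card =
        (Finset.univ.filter fun i => χ i = χ 0).card +
        (Finset.univ.filter fun i => χ i = χ 1).card := by
      rw [Finset.filter_or, Finset.card_union_of_disjoint]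
      rw [Finset.disjoint_filter]
      intro x _ hx hx'
      exact h01 (hx'.symm.trans hx)
    have p0 : 0 < (Finset.univ.filter fun i => χ i = χ 0).card :=
      Finset.card_pos.mpr ⟨0, by simp⟩
    have p1 : 0 < (Finset.univ.filter fun i => χ i = χ 1).card :=
      Finset.card_pos.mpr ⟨1, by simp⟩
    apply fib (χ 1)
    by_contra h51
    have q1 : (Finset.univ.filter fun i => χ i = χ 1).card ≤ 1 := by
      by_contra hh
      exact key χ hχ (fun x => x = χ 1) inferInstance (by omega) (by omega)
    exact key χ hχ (fun x => x = χ 0 ∨ x = χ 1) inferInstance (by omega) (by omega)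
  obtain ⟨b, i, hb⟩ := step1
  obtain ⟨j, hji⟩ : ∃ j : Fin 6, j ≠ i := exists_ne i
  have two : ∀ ψ : Fin 6 → ℤ, W ψ → ψ i ≠ b → ψ j ≠ b → (∀ l, l ≠ i → l ≠ j → ψ l = b) →
      False := by
    intro ψ hψ hi hj hl
    have : (Finset.univ.filter fun l => ψ l ≠ b) = {i, j} := by
      ext l
      simp only [Finset.mem_filter, Finset.mem_univ, true_and, Finset.mem_insert,
        Finset.mem_singleton]
      constructor
      · intro h
        by_contra hn
        push Not at hn
        exact h (hl l hn.1 hn.2)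
      · rintro (rfl | rfl) <;> assumption
    have hc : (Finset.univ.filter fun l => ψ l ≠ b).card = 2 := by
      rw [this, Finset.card_pair hji.symm]
    exact key ψ hψ (fun x => x ≠ b) inferInstance (by omega) (by omega)
  refine ⟨b, i, χ i - b, ?_, ?_⟩
  · by_contra hne
    push Not at hne
    obtain ⟨n0, n1, n2⟩ := hne
    have hbj := hb j hji
    rcases lt_or_gt_of_ne n0 with hlt | hgt
    · refine two _ (hsat χ j i hji (by omega) hχ) ?_ ?_ ?_
      · simp [hji.symm]; omega
      · simp [hji]; omega
      · intro l h1 h2; simp [h1, h2, hb l h1]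
    · refine two _ (hsat χ i j hji.symm (by omega) hχ) ?_ ?_ ?_
      · simp [hji.symm]; omega
      · simp [hji]; omega
      · intro l h1 h2; simp [h1, h2, hb l h1]
  · intro l
    by_cases hl : l = i
    · subst hl; simp
    · simp [hl, hb l hl]

lemma apply_eq_sum (f : Matrix (Fin 6) (Fin 6) k →ₗ[k] Module.End k M)
    (A : Matrix (Fin 6) (Fin 6) k) (m : M) :
    f A m = ∑ i, ∑ j, A i j • f (Matrix.single i j 1) m := by
  conv_lhs => rw [Matrix.matrix_eq_sum_single A]
  simp only [map_sum, LinearMap.sum_apply]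
  refine Finset.sum_congr rfl fun i _ => Finset.sum_congr rfl fun j _ => ?_
  have : Matrix.single i j (A i j) = A i j • Matrix.single i j (1 : k) := by simp
  rw [this, map_smul, LinearMap.smul_apply]

lemma standard_case (f : Matrix (Fin 6) (Fin 6) k →ₗ[k] Module.End k M)
    (hf : ∀ A B, f (A * B - B * A) = f A * f B - f B * f A)
    (irr : ∀ N : Submodule k M, (∀ A, ∀ m ∈ N, f A m ∈ N) → N = ⊥ ∨ N = ⊤)
    (z : Fin 6) (hz : IsW f (Pi.single z 1))
    (hW : ∀ χ, IsW f χ → ∃ i, χ = Pi.single i 1) :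
    ∃ e : M ≃ₗ[k] (Fin 6 → k), ∀ A m, e (f A m) = A.mulVec (e m) := by
  obtain ⟨m0, hm0, hw0⟩ := hz
  have hw0' : Wt f (Pi.single z 1) m0 := by
    convert hw0 using 1
    ext i
    simp [Pi.single_apply]
  have vanish : ∀ (χ : Fin 6 → ℤ) (χ' : Fin 6 → k) (m : M), Wt f χ' m → (∀ i, χ' i = χ i) →
      (∃ j, χ j < 0) → m = 0 := by
    rintro χ χ' m h heq ⟨j, hj⟩
    by_contra hne
    obtain ⟨i, hi⟩ := hW χ ⟨m, hne, fun l => by rw [h l, heq]⟩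
    rw [hi, Pi.single_apply] at hj
    split_ifs at hj <;> omega
  set v : Fin 6 → M := fun i => f (Matrix.single i z 1) m0 with hv
  have hvz : v z = m0 := by simpa using hw0' z
  have fact1 : ∀ i j, j ≠ z → f (Matrix.single i j 1) m0 = 0 := by
    intro i j hj
    by_cases hij : i = j
    · subst hij
      simpa [hj] using hw0' i
    · refine vanish (Pi.single z 1 + (Pi.single i 1 - Pi.single j 1)) _ _
        (hw0'.single_apply hf i j) (fun l => by simp [Pi.single_apply]) ⟨j, ?_⟩
      simp [hj, Ne.symm hij]
  have fact2 : ∀ i l, i ≠ z → l ≠ z → f (Matrix.single i z 1) (v l) = 0 := by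
    intro i l hi hl
    refine vanish (Pi.single z 1 + (Pi.single l 1 - Pi.single z 1)
        + (Pi.single i 1 - Pi.single z 1)) _ _
        ((hw0'.single_apply hf l z).single_apply hf i z)
        (fun l => by simp [Pi.single_apply]) ⟨z, ?_⟩
    simp [hi.symm, hl.symm]
  have comm : ∀ A B m, f A (f B m) = f (A * B - B * A) m + f B (f A m) := by
    intro A B m
    rw [hf]
    simp
  have act : ∀ i j l, f (Matrix.single i j 1) (v l) = if j = l then v i else 0 := by
    intro i j l
    by_cases hlz : l = z
    · subst hlz
      rw [hvz]
      split_ifs with h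
      · subst h; rfl
      · exact fact1 i j h
    by_cases hjz : j = z
    · subst hjz
      rw [if_neg (Ne.symm hlz)]
      by_cases hi : i = j
      · subst hi
        have := hw0'.single_apply hf l i i
        simpa [hv, Ne.symm hlz] using this
      · exact fact2 i l hi hlz
    · change f _ (f _ m0) = _
      rw [comm, fact1 i j hjz, map_zero, add_zero, map_sub, LinearMap.sub_apply]
      have h2 : f (Matrix.single l z 1 * Matrix.single i j 1) m0 = 0 := by
        by_cases hzi : z = i
        · subst hzi
          simpa using fact1 l j hjz
        · simp [hzi]
      rw [h2, sub_zero]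
      split_ifs with h
      · subst h; simp [hv]
      · simp [h]
  have act2 : ∀ A l, f A (v l) = ∑ i, A i l • v i := by
    intro A l
    rw [apply_eq_sum]
    simp [act]
  let φ : (Fin 6 → k) →ₗ[k] M := Fintype.linearCombination k v
  have hφ : ∀ w, φ w = ∑ i, w i • v i := fun w => Fintype.linearCombination_apply k v w
  have equi : ∀ A w, f A (φ w) = φ (A.mulVec w) := by
    intro A w
    rw [hφ, hφ]
    simp only [map_sum, map_smul, act2, Matrix.mulVec, dotProduct, Finset.sum_smul,
      Finset.smul_sum, smul_smul]
    rw [Finset.sum_comm]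
    simp only [mul_comm]
  have inj : Function.Injective φ := by
    rw [← LinearMap.ker_eq_bot, LinearMap.ker_eq_bot']
    intro w hw
    ext i
    have := congrArg (f (Matrix.single z i 1)) hw
    rw [hφ] at this
    simp only [map_sum, map_smul, act, map_zero] at this
    simpa [hvz, hm0] using this
  have surj : Function.Surjective φ := by
    rw [← LinearMap.range_eq_top]
    refine (irr _ ?_).resolve_left ?_
    · rintro A _ ⟨w, rfl⟩
      exact ⟨_, (equi A w).symm⟩
    · intro h
      have : m0 ∈ LinearMap.range φ := ⟨Pi.single z 1, by rw [hφ]; simp [Pi.single_apply, hvz]⟩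
      rw [h] at this
      exact hm0 (by simpa using this)
  let e := LinearEquiv.ofBijective φ ⟨inj, surj⟩
  refine ⟨e.symm, fun A m => ?_⟩
  rw [LinearEquiv.symm_apply_eq]
  change _ = φ _
  rw [← equi]
  congr 1
  exact (e.apply_symm_apply m).symm

/-- Twist of a representation of `gl` by a multiple of the trace. -/
def shiftTr (f : Matrix (Fin 6) (Fin 6) k →ₗ[k] Module.End k M) (a : k) :
    Matrix (Fin 6) (Fin 6) k →ₗ[k] Module.End k M :=
  f - (Matrix.traceLinearMap (Fin 6) k k).smulRight (a • (1 : Module.End k M))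

lemma shiftTr_apply (f : Matrix (Fin 6) (Fin 6) k →ₗ[k] Module.End k M) (a : k)
    (A : Matrix (Fin 6) (Fin 6) k) (m : M) : shiftTr f a A m = f A m - (A.trace * a) • m := by
  simp [shiftTr, smul_smul]

lemma shiftTr_comm {f : Matrix (Fin 6) (Fin 6) k →ₗ[k] Module.End k M} (a : k)
    (hf : ∀ A B, f (A * B - B * A) = f A * f B - f B * f A) (A B : Matrix (Fin 6) (Fin 6) k) :
    shiftTr f a (A * B - B * A) = shiftTr f a A * shiftTr f a B - shiftTr f a B * shiftTr f a A := by
  ext m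
  have : (A * B - B * A).trace = 0 := by rw [Matrix.trace_sub, Matrix.trace_mul_comm, sub_self]
  rw [shiftTr_apply, this, hf]
  simp only [LinearMap.sub_apply, Module.End.mul_apply, shiftTr_apply, map_sub, map_smul]
  module

lemma shiftTr_irr {f : Matrix (Fin 6) (Fin 6) k →ₗ[k] Module.End k M} (a : k)
    (irr : ∀ N : Submodule k M, (∀ A, ∀ m ∈ N, f A m ∈ N) → N = ⊥ ∨ N = ⊤)
    (N : Submodule k M) (h : ∀ A, ∀ m ∈ N, shiftTr f a A m ∈ N) : N = ⊥ ∨ N = ⊤ := by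
  refine irr N fun A m hm => ?_
  have := N.add_mem (h A m hm) (N.smul_mem (A.trace * a) hm)
  rwa [shiftTr_apply, sub_add_cancel] at this

lemma IsW.sum_eq {f : Matrix (Fin 6) (Fin 6) k →ₗ[k] Module.End k M} {c : k}
    (h1 : ∀ m, f 1 m = c • m) {χ : Fin 6 → ℤ} (h : IsW f χ) : ((∑ i, χ i : ℤ) : k) = c := by
  obtain ⟨m, hm, hw⟩ := h
  have h2 := apply_eq_sum f 1 m
  simp only [Matrix.one_apply, ite_smul, one_smul, zero_smul, Finset.sum_ite_eq, Finset.mem_univ,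
    if_true, h1, hw _] at h2
  rw [← Finset.sum_smul] at h2
  push_cast
  exact (smul_left_injective k hm h2).symm

lemma abstract_main [Nontrivial M] (f : Matrix (Fin 6) (Fin 6) k →ₗ[k] Module.End k M)
    (hf : ∀ A B, f (A * B - B * A) = f A * f B - f B * f A) (h1 : f 1 = 0)
    (irr : ∀ N : Submodule k M, (∀ A, ∀ m ∈ N, f A m ∈ N) → N = ⊥ ∨ N = ⊤)
    (hnt : ∃ A, A.trace = 0 ∧ f A ≠ 0) (hdim : finrank k M ≤ 14) :
    (∃ e : M ≃ₗ[k] (Fin 6 → k), ∀ A m, A.trace = 0 → e (f A m) = A.mulVec (e m)) ∨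
    (∃ e : M ≃ₗ[k] (Fin 6 → k), ∀ A m, A.trace = 0 → e (f A m) = - A.transpose.mulVec (e m)) := by
  obtain ⟨χ, hχ⟩ := common_eig (fun i => f (Matrix.single i i 1)) (diag_commute hf) Finset.univ
  rw [Submodule.ne_bot_iff] at hχ
  obtain ⟨m, hm, hm0⟩ := hχ
  simp only [Finset.mem_univ, Submodule.mem_iInf, Module.End.mem_eigenspace_iff,
    forall_true_left] at hm
  have hwt : Wt f χ m := hm
  have hinteg : ∀ i, ∃ n : ℤ, χ i - χ 0 = n := by
    intro i
    by_cases hi : i = 0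
    · exact ⟨0, by simp [hi]⟩
    · obtain ⟨n, hn, -⟩ := hwt.string hf hm0 hi
      exact ⟨n, hn⟩
  choose n hn using hinteg
  set g := shiftTr f (χ 0) with hg
  have gf := shiftTr_comm (χ 0) hf
  have girr := shiftTr_irr (χ 0) irr
  rw [← hg] at gf girr
  have gw : Wt g (fun i => (n i : k)) m := by
    intro i
    change _ = (n i : k) • m
    rw [hg, shiftTr_apply, hm i, ← hn i]
    simp [sub_smul]
  have g1 : ∀ m, g 1 m = (-(6 * χ 0)) • m := by
    intro m
    rw [hg, shiftTr_apply, h1]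
    simp
  -- a non-constant weight
  have hnc : ∃ ψ, IsW g ψ ∧ ∃ i j, ψ i ≠ ψ j := by
    by_contra hcon
    push Not at hcon
    have hcn := hcon n ⟨m, hm0, gw⟩
    have hE : ∀ i j, i ≠ j → g (Matrix.single i j 1) m = 0 := by
      intro i j hij
      by_contra hne
      have := hcon (n + (Pi.single i 1 - Pi.single j 1)) ⟨_, hne, by
        convert gw.single_apply gf i j using 1
        ext l
        simp [Pi.single_apply]⟩ i j
      simp only [Pi.add_apply, Pi.sub_apply, Pi.single_eq_same, Pi.single_eq_of_ne hij,
        Pi.single_eq_of_ne hij.symm, hcn i j] at this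
      omega
    have hA : ∀ A, g A m = (A.trace * n 0) • m := by
      intro A
      rw [apply_eq_sum, Matrix.trace, Finset.sum_mul, Finset.sum_smul]
      refine Finset.sum_congr rfl fun i _ => ?_
      rw [Finset.sum_eq_single i]
      · have := gw i
        simp only [hcn i 0] at this
        rw [this, smul_smul]; rfl
      · intro j _ hj
        rw [hE i j hj.symm, smul_zero]
      · simp
    have htop : Submodule.span k {m} = ⊤ := by
      refine (girr _ ?_).resolve_left (by simpa using hm0)
      intro A x hx
      obtain ⟨a, rfl⟩ := Submodule.mem_span_singleton.mp hx
      rw [map_smul, hA]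
      exact Submodule.smul_mem _ _ (Submodule.smul_mem _ _ (Submodule.mem_span_singleton_self m))
    obtain ⟨A, htr, hA0⟩ := hnt
    apply hA0
    ext x
    have hx : x ∈ Submodule.span k {m} := by rw [htop]; trivial
    obtain ⟨a, rfl⟩ := Submodule.mem_span_singleton.mp hx
    have := hA A
    rw [hg, shiftTr_apply, htr] at this
    simp only [zero_mul, zero_smul, sub_zero] at this
    rw [map_smul, this]
    simp
  obtain ⟨ψ, hψ, i, j, hij⟩ := hnc
  have shape := weights_shape (IsW g) (fun σ χ h => h.perm gf σ)
    (fun χ i j hij hlt h => by simpa using h.sat gf hij 1 (by push_cast; omega))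
    (fun S hS => (IsW.card_le gf S hS).trans hdim)
  obtain ⟨b, z, ε, hε, hb⟩ := shape ψ hψ
  have all : ∀ χ, IsW g χ → ∃ l, χ = fun x => b + if x = l then ε else 0 := by
    intro χ hχ
    obtain ⟨b', l, ε', hε', hb'⟩ := shape χ hχ
    have hs : ∑ i, χ i = ∑ i, ψ i := by
      have := (hχ.sum_eq g1).trans (hψ.sum_eq g1).symm
      exact_mod_cast this
    simp only [hb, hb', Finset.sum_add_distrib] at hs
    simp at hs
    have hε0 : ε ≠ 0 := by
      rintro rfl
      exact hij (by rw [hb, hb]; simp)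
    have e1 : b' = b := by omega
    have e2 : ε' = ε := by omega
    exact ⟨l, funext fun x => by rw [hb', e1, e2]⟩
  have hε0 : ε ≠ 0 := by
    rintro rfl
    exact hij (by rw [hb, hb]; simp)
  set q := shiftTr g (b : k) with hq
  have qf := shiftTr_comm (b : k) gf
  have qirr := shiftTr_irr (b : k) girr
  rw [← hq] at qf qirr
  have qtr : ∀ A m, A.trace = 0 → q A m = f A m := by
    intro A m h
    rw [hq, shiftTr_apply, hg, shiftTr_apply, h]
    simp
  have qW : ∀ χ : Fin 6 → ℤ, IsW q χ ↔ IsW g (fun i => b + χ i) := by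
    intro χ
    refine exists_congr fun m => and_congr_right fun _ => forall_congr' fun i => ?_
    rw [hq, shiftTr_apply, sub_eq_iff_eq_add]
    simp [add_smul, add_comm]
  have qall : ∀ χ, IsW q χ → ∃ l, χ = Pi.single l ε := by
    intro χ hχ
    obtain ⟨l, hl⟩ := all _ ((qW χ).mp hχ)
    refine ⟨l, funext fun x => ?_⟩
    have := congrFun hl x
    rw [Pi.single_apply]
    simpa using this
  have qz : IsW q (Pi.single z ε) := by
    rw [qW]
    convert hψ using 1
    ext x
    rw [hb, Pi.single_apply]
  rcases hε with rfl | rfl | rfl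
  · exact absurd rfl hε0
  · left
    obtain ⟨e, he⟩ := standard_case q qf qirr z qz qall
    exact ⟨e, fun A m h => by rw [← he, qtr A m h]⟩
  · right
    let r : Matrix (Fin 6) (Fin 6) k →ₗ[k] Module.End k M :=
      -(q ∘ₗ (Matrix.transposeLinearEquiv (Fin 6) (Fin 6) k k).toLinearMap)
    have hr : ∀ A, r A = - q A.transpose := fun A => rfl
    have rW : ∀ χ : Fin 6 → ℤ, IsW r χ ↔ IsW q (-χ) := by
      intro χ
      refine exists_congr fun m => and_congr_right fun _ => forall_congr' fun i => ?_
      rw [hr, Matrix.transpose_single, LinearMap.neg_apply, neg_eq_iff_eq_neg]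
      simp
    obtain ⟨e, he⟩ := standard_case r (by
        intro A B
        simp only [hr, Matrix.transpose_sub, Matrix.transpose_mul, qf]
        noncomm_ring) (by
        intro N hN
        refine qirr N fun A m hm => ?_
        have := N.neg_mem (hN A.transpose m hm)
        simpa [hr] using this) z (by
        rw [rW]
        convert qz using 1
        simp [Pi.single_neg]) (by
        intro χ hχ
        obtain ⟨l, hl⟩ := qall _ ((rW χ).mp hχ)
        refine ⟨l, ?_⟩
        rw [← neg_neg χ, hl]
        simp [Pi.single_neg])
    refine ⟨e, fun A m h => ?_⟩
    rw [← he, hr, Matrix.transpose_transpose, LinearMap.neg_apply, map_neg, neg_neg, qtr A m h]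

end Sl6Aux

section Sl6Final

set_option linter.unusedSectionVars false

attribute [local instance] LieRing.ofAssociativeRing

variable {k : Type*} [Field k] [CharZero k]

/-- Projection of matrices onto trace-free ones. -/
def slProj : Matrix (Fin 6) (Fin 6) k →ₗ[k] ↥(sl (Fin 6) k) :=
  LinearMap.codRestrict (sl (Fin 6) k).toSubmodule
    (LinearMap.id - (Matrix.traceLinearMap (Fin 6) k k).smulRight ((6 : k)⁻¹ • 1)) (by
      intro A
      change _ ∈ LinearMap.ker (Matrix.traceLinearMap (Fin 6) k k)
      simp [Matrix.trace_smul])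

lemma slProj_val (A : Matrix (Fin 6) (Fin 6) k) :
    (slProj A : Matrix (Fin 6) (Fin 6) k) = A - A.trace • (6 : k)⁻¹ • 1 := rfl

lemma sl_trace (x : ↥(sl (Fin 6) k)) : (x : Matrix (Fin 6) (Fin 6) k).trace = 0 := x.2

lemma slProj_coe (x : ↥(sl (Fin 6) k)) : slProj (x : Matrix (Fin 6) (Fin 6) k) = x := by
  ext1
  rw [slProj_val, sl_trace]
  simp

lemma slProj_comm (A B : Matrix (Fin 6) (Fin 6) k) :
    slProj (A * B - B * A) = ⁅slProj A, slProj B⁆ := by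
  ext1
  have : (A * B - B * A).trace = 0 := by rw [Matrix.trace_sub, Matrix.trace_mul_comm, sub_self]
  rw [sl_bracket, slProj_val, slProj_val, slProj_val, this]
  simp only [sub_mul, mul_sub, smul_smul, smul_mul_assoc, mul_smul_comm, one_mul, mul_one]
  module

lemma slProj_one : slProj (1 : Matrix (Fin 6) (Fin 6) k) = 0 := by
  ext1
  rw [slProj_val]
  simp

lemma std_not_dual : ¬ ∃ e : (Fin 6 → k) ≃ₗ[k] (Fin 6 → k),
    ∀ (x : ↥(sl (Fin 6) k)) (v : Fin 6 → k),
        e ((x : Matrix (Fin 6) (Fin 6) k).mulVec v)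
          = - (x : Matrix (Fin 6) (Fin 6) k).transpose.mulVec (e v) := by
  rintro ⟨e, he⟩
  have hx : Matrix.diagonal (fun i : Fin 6 => if i = 0 then (5 : k) else -1) ∈ sl (Fin 6) k := by
    change _ ∈ LinearMap.ker (Matrix.traceLinearMap (Fin 6) k k)
    simp [Matrix.trace_diagonal, Fin.sum_univ_succ]
  have h := he ⟨_, hx⟩ (Pi.single 0 1)
  have h0 : (Matrix.diagonal (fun i : Fin 6 => if i = 0 then (5 : k) else -1)).mulVec
      (Pi.single 0 1) = (5 : k) • Pi.single 0 1 := by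
    ext i
    by_cases hi : i = 0
    · subst hi; simp [Matrix.mulVec_diagonal]
    · simp [Matrix.mulVec_diagonal, hi]
  simp only [h0, map_smul, Matrix.diagonal_transpose] at h
  have hz : e (Pi.single 0 1) = 0 := by
    ext i
    have hi := congrFun h i
    simp only [Pi.smul_apply, Pi.neg_apply, Matrix.mulVec_diagonal, smul_eq_mul] at hi
    by_cases h0 : i = 0
    · rw [if_pos h0] at hi
      have : (10 : k) * e (Pi.single 0 1) i = 0 := by linear_combination hi
      simpa using this
    · rw [if_neg h0] at hi
      have : (4 : k) * e (Pi.single 0 1) i = 0 := by linear_combination hi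
      simpa using this
  have := e.map_eq_zero_iff.mp hz
  simpa using congrFun this 0

/-- The representation of `gl` obtained from a representation of `sl`. -/
def slRep (M : Type*) [AddCommGroup M] [Module k M] [LieRingModule ↥(sl (Fin 6) k) M]
    [LieModule k ↥(sl (Fin 6) k) M] : Matrix (Fin 6) (Fin 6) k →ₗ[k] Module.End k M :=
  (LieModule.toEnd k ↥(sl (Fin 6) k) M).toLinearMap ∘ₗ slProj

lemma slRep_apply (M : Type*) [AddCommGroup M] [Module k M] [LieRingModule ↥(sl (Fin 6) k) M]
    [LieModule k ↥(sl (Fin 6) k) M] (A : Matrix (Fin 6) (Fin 6) k) (m : M) :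
    slRep M A m = ⁅slProj A, m⁆ := rfl

end Sl6Final

/-- The Lie algebra `sl(6)` over an algebraically closed field of
characteristic zero has exactly two non-trivial irreducible representations of dimension at
most `14`: the standard (6-dimensional) representation and its dual; moreover these two are
not isomorphic. -/
theorem sl6_irreducibles_of_dim_le_14
    {k : Type*} [Field k] [IsAlgClosed k] [CharZero k] :
    (∀ (M : Type) (_ : AddCommGroup M) (_ : Module k M)
        (_ : LieRingModule ↥(sl (Fin 6) k) M) (_ : LieModule k ↥(sl (Fin 6) k) M)
        (_ : FiniteDimensional k M) (_ : LieModule.IsIrreducible k ↥(sl (Fin 6) k) M),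
      (¬ ∀ (x : ↥(sl (Fin 6) k)) (m : M), ⁅x, m⁆ = 0) →
      finrank k M ≤ 14 →
      ((∃ e : M ≃ₗ[k] (Fin 6 → k), ∀ (x : ↥(sl (Fin 6) k)) (m : M),
          e ⁅x, m⁆ = (x : Matrix (Fin 6) (Fin 6) k).mulVec (e m)) ∨
       (∃ e : M ≃ₗ[k] (Fin 6 → k), ∀ (x : ↥(sl (Fin 6) k)) (m : M),
          e ⁅x, m⁆ = - (x : Matrix (Fin 6) (Fin 6) k).transpose.mulVec (e m)))) ∧
    ¬ ∃ e : (Fin 6 → k) ≃ₗ[k] (Fin 6 → k), ∀ (x : ↥(sl (Fin 6) k)) (v : Fin 6 → k),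
        e ((x : Matrix (Fin 6) (Fin 6) k).mulVec v)
          = - (x : Matrix (Fin 6) (Fin 6) k).transpose.mulVec (e v) := by
  refine ⟨?_, std_not_dual⟩
  intro M _ _ _ _ _ hirr hnt hdim
  have : Nontrivial M := LieModule.nontrivial_of_isIrreducible k ↥(sl (Fin 6) k) M
  let f : Matrix (Fin 6) (Fin 6) k →ₗ[k] Module.End k M := slRep M
  have fx : ∀ (x : ↥(sl (Fin 6) k)) (m : M), f (x : Matrix (Fin 6) (Fin 6) k) m = ⁅x, m⁆ := by
    intro x m
    rw [slRep_apply, slProj_coe]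
  have key := abstract_main f (by
      intro A B
      ext m
      simp only [f, LinearMap.sub_apply, Module.End.mul_apply, slRep_apply, slProj_comm, lie_lie]) (by
      ext m
      rw [slRep_apply, slProj_one, zero_lie]
      rfl) (by
      intro N hN
      let N' : LieSubmodule k ↥(sl (Fin 6) k) M :=
        { N with lie_mem := fun {x m} hm => by rw [← fx]; exact hN _ _ hm }
      rcases eq_bot_or_eq_top N' with h | h
      · left
        exact congrArg LieSubmodule.toSubmodule h
      · right
        exact congrArg LieSubmodule.toSubmodule h) (by
      push Not at hnt
      obtain ⟨x, m, hxm⟩ := hnt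
      refine ⟨x, sl_trace x, fun h => hxm ?_⟩
      rw [← fx, h]
      rfl) hdim
  rcases key with ⟨e, he⟩ | ⟨e, he⟩
  · exact Or.inl ⟨e, fun x m => by rw [← fx, he _ _ (sl_trace x)]⟩
  · exact Or.inr ⟨e, fun x m => by rw [← fx, he _ _ (sl_trace x)]⟩
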